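/- Let n ∈ ℕ, x₀ ∈ ℝⁿ, δ ∈ (0, 1], and let μ be a probability measure on ℝⁿ whose support is contained in the closed ball B̄(x₀, δ/2). Let T : ℝⁿ → ℝⁿ be measurable with T(supp μ) ⊆ B̄(x₀, 2δ), and let f : ℝⁿ → ℝ be continuously differentiable. Suppose there are constants C₁, C₂, C₃ ≥ 0 such that: | f(Tz) − f(z) − ‖Tz − z‖ | ≤ C₁·δ⁴ and | f(Tz) − f(z) | ≤ C₂·δ for all z ∈ supp μ, and ‖∇f(z)‖ ≤ 1 + C₃·δ³ for all z ∈ B̄(x₀, 2δ). Then | W₁(μ, T_* μ) − ∫ ‖Tz − z‖ dμ(z) | ≤ C·δ⁴, where the constant C depends only on C₁, C₂, C₃. -/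

import Mathlib

/-!
The graph coupling `(id, T)_* μ` gives `W₁(μ, T_* μ) ≤ ∫ ‖T z - z‖ dμ`. Conversely, a `K`-Lipschitz
function on a set carrying both measures extends to a globally `K`-Lipschitz one, so integrating the
test function against any coupling gives `∫ ‖T z - z‖ dμ ≤ K W₁(μ, T_* μ) + ε`, where `ε` is the
defect of `f (T z) - f z` from `‖T z - z‖`. The gradient bound allows `K = 1 + C₃ δ³`, and the
surplus `C₃ δ³ W₁` is `O(δ⁴)` because `T` moves points by at most `5 δ / 2`.
-/

open MeasureTheory Set

/-- The 1-Wasserstein distance: infimum over couplings of the integral of the distance. -/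
noncomputable def W1 {X : Type*} [MeasurableSpace X] [PseudoMetricSpace X]
    (μ ν : Measure X) : ℝ :=
  sInf { c : ℝ | ∃ π : Measure (X × X), IsProbabilityMeasure π ∧
      π.map Prod.fst = μ ∧ π.map Prod.snd = ν ∧ c = ∫ p, dist p.1 p.2 ∂π }

/-- The topological support of a measure: points all of whose neighbourhoods have positive
measure. -/
def msupport {X : Type*} [TopologicalSpace X] [MeasurableSpace X] (μ : Measure X) : Set X :=
  {x | ∀ U ∈ nhds x, 0 < μ U}

open scoped NNReal

section Coupling

variable {X Y : Type*} [MeasurableSpace X] [MeasurableSpace Y] {μ : Measure X} {ν : Measure Y}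
  {π : Measure (X × Y)} {T : X → Y}

/-- `π` is a coupling of `μ` and `ν`: its marginals are `μ` and `ν`. For probability measures
these are the admissible transport plans in `W1 μ ν`. -/
structure IsCoupling (π : Measure (X × Y)) (μ : Measure X) (ν : Measure Y) : Prop where
  map_fst : π.map Prod.fst = μ
  map_snd : π.map Prod.snd = ν

theorem IsCoupling.isProbabilityMeasure [IsProbabilityMeasure μ] (h : IsCoupling π μ ν) :
    IsProbabilityMeasure π :=
  have : IsProbabilityMeasure (π.map Prod.fst) := by rwa [h.map_fst]
  Measure.isProbabilityMeasure_of_map Prod.fst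

theorem isCoupling_prod [IsProbabilityMeasure μ] [IsProbabilityMeasure ν] :
    IsCoupling (μ.prod ν) μ ν :=
  ⟨Measure.fst_prod, Measure.snd_prod⟩

theorem isCoupling_map_graph (hT : AEMeasurable T μ) :
    IsCoupling (μ.map fun z ↦ (z, T z)) μ (μ.map T) where
  map_fst := (Measure.fst_map_prodMk₀ hT).trans Measure.map_id
  map_snd := Measure.snd_map_prodMk₀ aemeasurable_id

section Integral

variable {E : Type*} [NormedAddCommGroup E] {g : X → E} {k : Y → E}

theorem IsCoupling.integrable_comp_fst (h : IsCoupling π μ ν) (hg : Integrable g μ) :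
    Integrable (fun p ↦ g p.1) π :=
  (h.map_fst ▸ hg).comp_measurable measurable_fst

theorem IsCoupling.integrable_comp_snd (h : IsCoupling π μ ν) (hk : Integrable k ν) :
    Integrable (fun p ↦ k p.2) π :=
  (h.map_snd ▸ hk).comp_measurable measurable_snd

variable [NormedSpace ℝ E]

theorem IsCoupling.integral_comp_fst (h : IsCoupling π μ ν) (hg : AEStronglyMeasurable g μ) :
    ∫ p, g p.1 ∂π = ∫ x, g x ∂μ := by
  rw [← h.map_fst] at hg ⊢
  exact (integral_map measurable_fst.aemeasurable hg).symm

theorem IsCoupling.integral_comp_snd (h : IsCoupling π μ ν) (hk : AEStronglyMeasurable k ν) :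
    ∫ p, k p.2 ∂π = ∫ y, k y ∂ν := by
  rw [← h.map_snd] at hk ⊢
  exact (integral_map measurable_snd.aemeasurable hk).symm

end Integral

end Coupling

section Wasserstein

variable {X : Type*} [MeasurableSpace X] [PseudoMetricSpace X] {μ ν : Measure X}
  {π : Measure (X × X)} {T : X → X} {x₀ : X} {K : ℝ≥0} {f : X → ℝ}

theorem IsCoupling.W1_le_integral_dist [IsProbabilityMeasure μ] (h : IsCoupling π μ ν) :
    W1 μ ν ≤ ∫ p, dist p.1 p.2 ∂π := by
  refine csInf_le ⟨0, ?_⟩ ⟨π, h.isProbabilityMeasure, h.map_fst, h.map_snd, rfl⟩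
  rintro _ ⟨_, -, -, -, rfl⟩
  exact integral_nonneg fun _ ↦ dist_nonneg

theorem le_W1 [IsProbabilityMeasure μ] [IsProbabilityMeasure ν] {c : ℝ}
    (hc : ∀ π, IsCoupling π μ ν → c ≤ ∫ p, dist p.1 p.2 ∂π) : c ≤ W1 μ ν := by
  have hprod : IsCoupling (μ.prod ν) μ ν := isCoupling_prod
  refine le_csInf ⟨_, _, hprod.isProbabilityMeasure, hprod.map_fst, hprod.map_snd, rfl⟩ ?_
  rintro _ ⟨π, -, hfst, hsnd, rfl⟩
  exact hc π ⟨hfst, hsnd⟩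

variable [OpensMeasurableSpace X]

theorem integrable_dist_of_ae_mem_closedBall [IsFiniteMeasure μ] {r : ℝ}
    (h : ∀ᵐ x ∂μ, x ∈ Metric.closedBall x₀ r) : Integrable (fun x ↦ dist x x₀) μ :=
  .of_bound (by fun_prop) r <| h.mono fun x hx ↦ by
    simpa only [Real.norm_of_nonneg dist_nonneg, Metric.mem_closedBall] using hx

theorem integrable_of_lipschitzWith [IsFiniteMeasure μ] (hf : LipschitzWith K f)
    (hμ : Integrable (fun x ↦ dist x x₀) μ) : Integrable f μ := by
  refine ((hμ.const_mul K).add (integrable_const ‖f x₀‖)).mono'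
    hf.continuous.aestronglyMeasurable (ae_of_all _ fun x ↦ ?_)
  calc ‖f x‖ ≤ ‖f x - f x₀‖ + ‖f x₀‖ := norm_le_norm_sub_add _ _
    _ ≤ K * dist x x₀ + ‖f x₀‖ := by gcongr; exact hf.dist_le_mul x x₀

variable [SecondCountableTopology X]

theorem W1_map_le_integral_dist [IsProbabilityMeasure μ] (hT : AEMeasurable T μ) :
    W1 μ (μ.map T) ≤ ∫ z, dist z (T z) ∂μ :=
  (isCoupling_map_graph hT).W1_le_integral_dist.trans_eq <|
    integral_map (aemeasurable_id.prodMk hT) continuous_dist.aestronglyMeasurable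

theorem IsCoupling.integrable_dist (h : IsCoupling π μ ν)
    (hμ : Integrable (fun x ↦ dist x x₀) μ) (hν : Integrable (fun x ↦ dist x x₀) ν) :
    Integrable (fun p : X × X ↦ dist p.1 p.2) π := by
  refine ((h.integrable_comp_fst hμ).add (h.integrable_comp_snd hν)).mono'
    continuous_dist.aestronglyMeasurable (ae_of_all _ fun p ↦ ?_)
  rw [Real.norm_of_nonneg dist_nonneg]
  exact dist_triangle_right _ _ _

-- The first moments matter: in `W1`, a coupling of infinite cost has Bochner integral `0`.
theorem integral_sub_integral_le_mul_W1 [IsProbabilityMeasure μ] [IsProbabilityMeasure ν]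
    (hf : LipschitzWith K f) (hμ : Integrable (fun x ↦ dist x x₀) μ)
    (hν : Integrable (fun x ↦ dist x x₀) ν) :
    ∫ x, f x ∂ν - ∫ x, f x ∂μ ≤ K * W1 μ ν := by
  have hfμ := integrable_of_lipschitzWith hf hμ
  have hfν := integrable_of_lipschitzWith hf hν
  have hcoupling (π) (h : IsCoupling π μ ν) :
      ∫ x, f x ∂ν - ∫ x, f x ∂μ ≤ K * ∫ p, dist p.1 p.2 ∂π := by
    have hint₁ := h.integrable_comp_fst hfμ
    have hint₂ := h.integrable_comp_snd hfν
    calc ∫ x, f x ∂ν - ∫ x, f x ∂μ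
        = ∫ p, (f p.2 - f p.1) ∂π := by
          rw [integral_sub hint₂ hint₁, h.integral_comp_fst hfμ.1, h.integral_comp_snd hfν.1]
      _ ≤ ∫ p, K * dist p.1 p.2 ∂π := by
          refine integral_mono (hint₂.sub hint₁) ((h.integrable_dist hμ hν).const_mul _) fun p ↦ ?_
          rw [dist_comm]
          exact (le_abs_self _).trans (hf.dist_le_mul p.2 p.1)
      _ = K * ∫ p, dist p.1 p.2 ∂π := integral_const_mul _ _
  obtain rfl | hK := eq_zero_or_pos K
  · simpa using hcoupling _ isCoupling_prod
  · rw [← div_le_iff₀' (by exact_mod_cast hK)]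
    exact le_W1 fun π h ↦ (div_le_iff₀' (by exact_mod_cast hK)).2 (hcoupling π h)

theorem integral_dist_le_mul_W1_map_add [IsProbabilityMeasure μ] {s : Set X} {ε : ℝ}
    (hT : AEMeasurable T μ) (hf : LipschitzOnWith K f s)
    (hμ : Integrable (fun x ↦ dist x x₀) μ) (hTμ : Integrable (fun x ↦ dist x x₀) (μ.map T))
    (hs : ∀ᵐ z ∂μ, z ∈ s) (hTs : ∀ᵐ z ∂μ, T z ∈ s)
    (hfT : ∀ᵐ z ∂μ, dist z (T z) ≤ f (T z) - f z + ε) :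
    ∫ z, dist z (T z) ∂μ ≤ K * W1 μ (μ.map T) + ε := by
  have := Measure.isProbabilityMeasure_map hT
  obtain ⟨g, hg, hfg⟩ := hf.extend_real
  have hgμ := integrable_of_lipschitzWith hg hμ
  have hgT : Integrable (fun z ↦ g (T z)) μ :=
    (integrable_of_lipschitzWith hg hTμ).comp_aemeasurable hT
  calc ∫ z, dist z (T z) ∂μ
      ≤ ∫ z, (g (T z) - g z + ε) ∂μ := by
        refine integral_mono_of_nonneg (ae_of_all _ fun _ ↦ dist_nonneg)
          ((hgT.sub hgμ).add (integrable_const ε)) ?_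
        filter_upwards [hs, hTs, hfT] with z hz hTz hfTz
        rwa [← hfg hz, ← hfg hTz]
    _ = ∫ x, g x ∂(μ.map T) - ∫ x, g x ∂μ + ε := by
        rw [integral_map hT hg.continuous.aestronglyMeasurable,
          ← integral_sub hgT hgμ,
          integral_add (f := fun z ↦ g (T z) - g z) (hgT.sub hgμ) (integrable_const ε),
          integral_const, probReal_univ, one_smul]
    _ ≤ K * W1 μ (μ.map T) + ε := by
        gcongr
        exact integral_sub_integral_le_mul_W1 hg hμ hTμ

theorem abs_W1_map_sub_integral_dist_le [IsProbabilityMeasure μ] {s : Set X} {L : ℝ≥0} {ε D : ℝ}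
    (hT : AEMeasurable T μ) (hf : LipschitzOnWith (1 + L) f s)
    (hμ : Integrable (fun x ↦ dist x x₀) μ) (hTμ : Integrable (fun x ↦ dist x x₀) (μ.map T))
    (hs : ∀ᵐ z ∂μ, z ∈ s) (hTs : ∀ᵐ z ∂μ, T z ∈ s)
    (hfT : ∀ᵐ z ∂μ, dist z (T z) ≤ f (T z) - f z + ε)
    (hD : ∀ᵐ z ∂μ, dist z (T z) ≤ D) :
    |W1 μ (μ.map T) - ∫ z, dist z (T z) ∂μ| ≤ ε + L * D := by
  have hupper := W1_map_le_integral_dist hT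
  have hlower := integral_dist_le_mul_W1_map_add hT hf hμ hTμ hs hTs hfT
  have hintegral : ∫ z, dist z (T z) ∂μ ≤ D := by
    simpa using integral_mono_of_nonneg (ae_of_all _ fun _ ↦ dist_nonneg) (integrable_const D) hD
  rw [abs_sub_comm, abs_of_nonneg (sub_nonneg.2 hupper), sub_le_iff_le_add]
  calc ∫ z, dist z (T z) ∂μ
      ≤ (1 + L) * W1 μ (μ.map T) + ε := by exact_mod_cast hlower
    _ = ε + L * W1 μ (μ.map T) + W1 μ (μ.map T) := by ring
    _ ≤ ε + L * D + W1 μ (μ.map T) := by gcongr; exact hupper.trans hintegral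

end Wasserstein

theorem ae_mem_msupport {X : Type*} [TopologicalSpace X] [HereditarilyLindelofSpace X]
    [MeasurableSpace X] (μ : Measure X) : ∀ᵐ x ∂μ, x ∈ msupport μ :=
  Filter.mem_of_superset μ.support_mem_ae fun x ↦ (Measure.mem_support_iff_forall x).1

theorem test_function_transport_estimate_general {E : Type*} [NormedAddCommGroup E]
    [NormedSpace ℝ E] [SecondCountableTopology E] [MeasurableSpace E] [OpensMeasurableSpace E]
    {μ : Measure E} [IsProbabilityMeasure μ] {x₀ : E} {C₁ C₃ δ : ℝ} (hC₃ : 0 ≤ C₃) (hδ : 0 ≤ δ)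
    (hμ : msupport μ ⊆ Metric.closedBall x₀ (δ / 2)) {T : E → E} (hT : AEMeasurable T μ)
    (hTμ : MapsTo T (msupport μ) (Metric.closedBall x₀ (2 * δ)))
    {f : E → ℝ} {f' : E → E →L[ℝ] ℝ}
    (hf : ∀ z ∈ Metric.closedBall x₀ (2 * δ),
      HasFDerivWithinAt f (f' z) (Metric.closedBall x₀ (2 * δ)) z)
    (hfT : ∀ z ∈ msupport μ, ‖T z - z‖ ≤ f (T z) - f z + C₁ * δ ^ 4)
    (hf' : ∀ z ∈ Metric.closedBall x₀ (2 * δ), ‖f' z‖ ≤ 1 + C₃ * δ ^ 3) :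
    |W1 μ (μ.map T) - ∫ z, ‖T z - z‖ ∂μ| ≤ (C₁ + 5 / 2 * C₃) * δ ^ 4 := by
  have hsupp := ae_mem_msupport μ
  have hball : ∀ᵐ z ∂μ, z ∈ Metric.closedBall x₀ (δ / 2) := hsupp.mono hμ
  have hTball : ∀ᵐ z ∂μ, T z ∈ Metric.closedBall x₀ (2 * δ) := hsupp.mono hTμ
  let L : ℝ≥0 := ⟨C₃ * δ ^ 3, by positivity⟩
  have hLip : LipschitzOnWith (1 + L) f (Metric.closedBall x₀ (2 * δ)) :=
    (convex_closedBall x₀ (2 * δ)).lipschitzOnWith_of_nnnorm_hasFDerivWithin_le hf hf'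
  have hmove : ∀ᵐ z ∂μ, dist z (T z) ≤ 5 / 2 * δ := by
    filter_upwards [hball, hTball] with z hz hTz
    linarith [dist_triangle_right z (T z) x₀, Metric.mem_closedBall.1 hz,
      Metric.mem_closedBall.1 hTz]
  have hestimate := abs_W1_map_sub_integral_dist_le hT hLip
    (integrable_dist_of_ae_mem_closedBall hball)
    (integrable_dist_of_ae_mem_closedBall
      ((ae_map_iff hT Metric.isClosed_closedBall.measurableSet).2 hTball))
    (hball.mono fun z hz ↦ Metric.closedBall_subset_closedBall (by linarith) hz) hTball
    (hsupp.mono fun z hz ↦ by simpa only [dist_comm z, dist_eq_norm] using hfT z hz) hmove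
  calc |W1 μ (μ.map T) - ∫ z, ‖T z - z‖ ∂μ|
      = |W1 μ (μ.map T) - ∫ z, dist z (T z) ∂μ| := by simp only [dist_comm _ (T _), dist_eq_norm]
    _ ≤ C₁ * δ ^ 4 + C₃ * δ ^ 3 * (5 / 2 * δ) := hestimate
    _ = (C₁ + 5 / 2 * C₃) * δ ^ 4 := by ring

/-- Kantorovich–Rubinstein test function estimate: if `f(Tz) − f(z) = ‖Tz − z‖ + O(δ⁴)` on
the support of `μ` and `‖∇f‖ ≤ 1 + O(δ³)` on `B̄(x₀, 2δ)`, then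
`W₁(μ, T_*μ) = ∫ ‖Tz − z‖ dμ(z) + O(δ⁴)`, with a constant depending only on `C₁, C₂, C₃`. -/
theorem test_function_transport_estimate
    (C₁ C₂ C₃ : ℝ) (hC₁ : 0 ≤ C₁) (hC₂ : 0 ≤ C₂) (hC₃ : 0 ≤ C₃) :
    ∃ C > (0:ℝ), ∀ (n : ℕ) (x₀ : EuclideanSpace ℝ (Fin n)) (δ : ℝ), δ ∈ Ioc (0:ℝ) 1 →
      ∀ μ : Measure (EuclideanSpace ℝ (Fin n)), IsProbabilityMeasure μ →
      msupport μ ⊆ Metric.closedBall x₀ (δ / 2) →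
      ∀ T : EuclideanSpace ℝ (Fin n) → EuclideanSpace ℝ (Fin n), Measurable T →
      T '' msupport μ ⊆ Metric.closedBall x₀ (2 * δ) →
      ∀ f : EuclideanSpace ℝ (Fin n) → ℝ, ContDiff ℝ 1 f →
      (∀ z ∈ msupport μ, |f (T z) - f z - ‖T z - z‖| ≤ C₁ * δ ^ 4) →
      (∀ z ∈ msupport μ, |f (T z) - f z| ≤ C₂ * δ) →
      (∀ z ∈ Metric.closedBall x₀ (2 * δ), ‖gradient f z‖ ≤ 1 + C₃ * δ ^ 3) →
      |W1 μ (μ.map T) - ∫ z, ‖T z - z‖ ∂μ| ≤ C * δ ^ 4 := by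
  refine ⟨C₁ + 5 / 2 * C₃ + 1, by positivity, ?_⟩
  intro n x₀ δ ⟨hδ, _⟩ μ _ hμ T hT hTμ f hf hfT _ hgrad
  have hestimate := test_function_transport_estimate_general (C₁ := C₁) hC₃ hδ.le hμ hT.aemeasurable
    (mapsTo_iff_image_subset.2 hTμ) (f' := fderiv ℝ f)
    (fun z _ ↦ (hf.differentiable one_ne_zero z).hasFDerivAt.hasFDerivWithinAt)
    (fun z hz ↦ by linarith [(abs_le.1 (hfT z hz)).1])
    (fun z hz ↦ by simpa only [gradient, LinearIsometryEquiv.norm_map] using hgrad z hz)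
  exact hestimate.trans (mul_le_mul_of_nonneg_right (by linarith) (by positivity))
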